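/- Suppose that for all x ∈ ℝ: ∂ᵧω(x,0) = (ε/(R sin θ)) · e^{ω(x,0)} + (cos θ/(2 sin θ)) · (e^{ω(x,0)} + e^{−ω(x,0)}). Then the map x ↦ u(x,0) − εR · (sin θ · e^{−ω(x,0)} · ∂ᵧu(x,0) − cos θ · N(x,0)) is constant on ℝ. In particular, there exists c ∈ ℝ³ such that for all x ∈ ℝ: sin θ · e^{−ω(x,0)} · ∂ᵧu(x,0) − cos θ · N(x,0) = (ε/R) · (u(x,0) − c) and ‖u(x,0) − c‖ = R; that is, the restriction of u to the line y = 0 lies on a sphere of radius R, with which u makes constant angle θ. -/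

import Mathlib

/-!
Write `X = ∂ₓu`, `Y = ∂ᵧu`. Since `(X, Y, N)` is an orthogonal frame of `ℝ³`
(`eq_zero_of_inner_frame`), a vector is determined by its inner products with these three vectors.
Differentiating `⟪Y, Y⟫ = e^{2ω}` along `x` and `⟪X, X⟫ = e^{2ω}` along `y`
(`inner_fderiv_of_inner_self_eq_exp`), and using the symmetry of second derivatives, gives
`∂ₓ∂ᵧu = ω_y X + ω_x Y` (`pdxy_eq`), hence `∂ₓ(e^{-ω} Y) = e^{-ω} ω_y X`. Similarly
`∂ₓN = ½ (1 + e^{-2ω}) X` (`pdx_normal_eq`). The derivative along `y = 0` of the map in question is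
therefore a multiple of `X`, and the boundary condition on `ω_y` says exactly that this multiple
vanishes. The constant value `c` is the centre of the sphere: `u - c` is `±R` times
`sin θ e^{-ω} Y - cos θ N`, which is a unit vector because `e^{-ω} Y` and `N` are orthonormal.
-/

open scoped RealInnerProductSpace

/-- Partial derivative in the x-direction. -/
noncomputable def pdx (f : ℝ × ℝ → EuclideanSpace ℝ (Fin 3)) (p : ℝ × ℝ) :
    EuclideanSpace ℝ (Fin 3) := fderiv ℝ f p (1, 0)

/-- Partial derivative in the y-direction. -/
noncomputable def pdy (f : ℝ × ℝ → EuclideanSpace ℝ (Fin 3)) (p : ℝ × ℝ) :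
    EuclideanSpace ℝ (Fin 3) := fderiv ℝ f p (0, 1)

/-- Mixed partial derivative ∂ₓ∂ᵧ. -/
noncomputable def pdxy (f : ℝ × ℝ → EuclideanSpace ℝ (Fin 3)) (p : ℝ × ℝ) :
    EuclideanSpace ℝ (Fin 3) := fderiv ℝ (fun z => fderiv ℝ f z (0, 1)) p (1, 0)

/-- Partial derivative in the y-direction of a real-valued function. -/
noncomputable def pdyR (f : ℝ × ℝ → ℝ) (p : ℝ × ℝ) : ℝ := fderiv ℝ f p (0, 1)

/-- Three pairwise orthogonal nonzero vectors span `ℝ³`, so only `0` is orthogonal to all three. -/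
lemma eq_zero_of_inner_frame {X Y N v : EuclideanSpace ℝ (Fin 3)}
    (hX : X ≠ 0) (hY : Y ≠ 0) (hN : N ≠ 0) (hXY : ⟪X, Y⟫ = 0) (hNX : ⟪N, X⟫ = 0)
    (hNY : ⟪N, Y⟫ = 0) (h1 : ⟪v, X⟫ = 0) (h2 : ⟪v, Y⟫ = 0) (h3 : ⟪v, N⟫ = 0) : v = 0 := by
  have hli : LinearIndependent ℝ ![X, Y, N] := by
    apply linearIndependent_of_ne_zero_of_inner_eq_zero
    · intro i
      fin_cases i <;> simpa
    · have hYX := (real_inner_comm X Y).trans hXY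
      have hXN := (real_inner_comm N X).trans hNX
      have hYN := (real_inner_comm N Y).trans hNY
      intro i j hij
      fin_cases i <;> fin_cases j <;> simp_all
  have hspan := hli.span_eq_top_of_card_eq_finrank (by simp)
  have hle : Submodule.span ℝ (Set.range ![X, Y, N]) ≤ (ℝ ∙ v)ᗮ := by
    rw [Submodule.span_le]
    rintro _ ⟨i, rfl⟩
    rw [SetLike.mem_coe, Submodule.mem_orthogonal_singleton_iff_inner_right]
    fin_cases i <;> simpa
  have hv : v ∈ (ℝ ∙ v)ᗮ := hle (hspan ▸ Submodule.mem_top)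
  exact inner_self_eq_zero.mp (Submodule.mem_orthogonal_singleton_iff_inner_right.mp hv)

/-- The derivative of `⟪f, f⟫ = e^{2ω}` in the direction `v`, divided by two. -/
lemma inner_fderiv_of_inner_self_eq_exp {f : ℝ × ℝ → EuclideanSpace ℝ (Fin 3)} {ω : ℝ × ℝ → ℝ}
    {p : ℝ × ℝ} (hf : DifferentiableAt ℝ f p) (hω : DifferentiableAt ℝ ω p)
    (h : ∀ q, ⟪f q, f q⟫ = Real.exp (2 * ω q)) (v : ℝ × ℝ) :
    ⟪fderiv ℝ f p v, f p⟫ = fderiv ℝ ω p v * Real.exp (2 * ω p) := by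
  have h1 := fderiv_inner_apply ℝ hf hf v
  have h2 : HasFDerivAt (fun q => Real.exp (2 * ω q)) _ p :=
    ((hω.hasFDerivAt.const_mul 2).exp)
  have h3 : (fun q => ⟪f q, f q⟫) = fun q => Real.exp (2 * ω q) := funext h
  rw [h3, h2.fderiv, real_inner_comm (fderiv ℝ f p v) (f p)] at h1
  simp only [smul_apply, smul_eq_mul] at h1
  linarith

lemma differentiableAt_fderiv_apply {u : ℝ × ℝ → EuclideanSpace ℝ (Fin 3)}
    (hu : ContDiff ℝ 2 u) (p v : ℝ × ℝ) : DifferentiableAt ℝ (fun z => fderiv ℝ u z v) p :=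
  ((hu.fderiv_right (m := 1) (by norm_num)).differentiable (by norm_num) p).clm_apply
    (differentiableAt_const v)

lemma pdxy_eq_fderiv_pdx {u : ℝ × ℝ → EuclideanSpace ℝ (Fin 3)}
    (hu : ContDiff ℝ 2 u) (p : ℝ × ℝ) : pdxy u p = fderiv ℝ (pdx u) p (0, 1) := by
  have hd : DifferentiableAt ℝ (fderiv ℝ u) p :=
    (hu.fderiv_right (m := 1) (by norm_num)).differentiable (by norm_num) p
  have hs := (hu.contDiffAt (x := p)).isSymmSndFDerivAt (by simp)
  have hx : fderiv ℝ (pdx u) p (0, 1) = fderiv ℝ (fderiv ℝ u) p (0, 1) (1, 0) := by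
    unfold pdx
    rw [fderiv_clm_apply hd (differentiableAt_const _)]
    simp
  have hy : pdxy u p = fderiv ℝ (fderiv ℝ u) p (1, 0) (0, 1) := by
    unfold pdxy
    rw [fderiv_clm_apply hd (differentiableAt_const _)]
    simp
  rw [hx, hy]
  exact hs.eq _ _

/-- The Gauss formula `∂ₓ∂ᵧu = ω_y ∂ₓu + ω_x ∂ᵧu` for curvature line coordinates. -/
lemma pdxy_eq {u N : ℝ × ℝ → EuclideanSpace ℝ (Fin 3)} {ω : ℝ × ℝ → ℝ}
    (hu : ContDiff ℝ 2 u) (hω : ContDiff ℝ 1 ω)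
    (hxx : ∀ p : ℝ × ℝ, ⟪pdx u p, pdx u p⟫ = Real.exp (2 * ω p))
    (hyy : ∀ p : ℝ × ℝ, ⟪pdy u p, pdy u p⟫ = Real.exp (2 * ω p))
    (hxy : ∀ p : ℝ × ℝ, ⟪pdx u p, pdy u p⟫ = 0)
    (hNN : ∀ p : ℝ × ℝ, ⟪N p, N p⟫ = 1)
    (hNx : ∀ p : ℝ × ℝ, ⟪N p, pdx u p⟫ = 0)
    (hNy : ∀ p : ℝ × ℝ, ⟪N p, pdy u p⟫ = 0)
    (hmix : ∀ p : ℝ × ℝ, ⟪pdxy u p, N p⟫ = 0) (p : ℝ × ℝ) :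
    pdxy u p = pdyR ω p • pdx u p + fderiv ℝ ω p (1, 0) • pdy u p := by
  have hωp : DifferentiableAt ℝ ω p := hω.differentiable (by norm_num) p
  have hY : ⟪pdxy u p, pdy u p⟫ = fderiv ℝ ω p (1, 0) * Real.exp (2 * ω p) :=
    inner_fderiv_of_inner_self_eq_exp (differentiableAt_fderiv_apply hu p (0, 1)) hωp hyy (1, 0)
  have hX : ⟪pdxy u p, pdx u p⟫ = pdyR ω p * Real.exp (2 * ω p) := by
    rw [pdxy_eq_fderiv_pdx hu]
    exact inner_fderiv_of_inner_self_eq_exp (differentiableAt_fderiv_apply hu p (1, 0)) hωp hxx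
      (0, 1)
  have hYX : ⟪pdy u p, pdx u p⟫ = 0 := (real_inner_comm _ _).trans (hxy p)
  have hXN : ⟪pdx u p, N p⟫ = 0 := (real_inner_comm _ _).trans (hNx p)
  have hYN : ⟪pdy u p, N p⟫ = 0 := (real_inner_comm _ _).trans (hNy p)
  rw [← sub_eq_zero]
  refine eq_zero_of_inner_frame (X := pdx u p) (Y := pdy u p) (N := N p) ?_ ?_ ?_
    (hxy p) (hNx p) (hNy p) ?_ ?_ ?_
  · intro h
    exact (Real.exp_pos (2 * ω p)).ne (by simpa [h] using hxx p)
  · intro h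
    exact (Real.exp_pos (2 * ω p)).ne (by simpa [h] using hyy p)
  · intro h
    simpa [h] using hNN p
  · simp only [inner_sub_left, inner_add_left, real_inner_smul_left, hX, hxx p, hYX]
    ring
  · simp only [inner_sub_left, inner_add_left, real_inner_smul_left, hY, hyy p, hxy p]
    ring
  · simp only [inner_sub_left, inner_add_left, real_inner_smul_left, hmix p, hXN, hYN]
    ring

/-- The Weingarten equation in the `x`-direction: `∂ₓN = ½ (1 + e^{-2ω}) ∂ₓu`. -/
lemma pdx_normal_eq {u N : ℝ × ℝ → EuclideanSpace ℝ (Fin 3)} {ω : ℝ × ℝ → ℝ}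
    (hN : ContDiff ℝ 1 N)
    (hxx : ∀ p : ℝ × ℝ, ⟪pdx u p, pdx u p⟫ = Real.exp (2 * ω p))
    (hyy : ∀ p : ℝ × ℝ, ⟪pdy u p, pdy u p⟫ = Real.exp (2 * ω p))
    (hxy : ∀ p : ℝ × ℝ, ⟪pdx u p, pdy u p⟫ = 0)
    (hNN : ∀ p : ℝ × ℝ, ⟪N p, N p⟫ = 1)
    (hNx : ∀ p : ℝ × ℝ, ⟪N p, pdx u p⟫ = 0)
    (hNy : ∀ p : ℝ × ℝ, ⟪N p, pdy u p⟫ = 0)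
    (hIIx : ∀ p : ℝ × ℝ,
      ⟪pdx N p, pdx u p⟫ = (1/2) * Real.exp (2 * ω p) * (1 + Real.exp (-(2 * ω p))))
    (hIIxy : ∀ p : ℝ × ℝ, ⟪pdx N p, pdy u p⟫ = 0) (p : ℝ × ℝ) :
    pdx N p = ((1/2) * (1 + Real.exp (-(2 * ω p)))) • pdx u p := by
  -- The unit length of `N` is the case `ω = 0` of the differentiated relation.
  have hn : ⟪pdx N p, N p⟫ = 0 := by
    have := inner_fderiv_of_inner_self_eq_exp (ω := fun _ => 0)
      (hN.differentiable (by norm_num) p) (differentiableAt_const _) (by simpa using hNN) (1, 0)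
    simpa [pdx] using this
  have hXN : ⟪pdx u p, N p⟫ = 0 := (real_inner_comm _ _).trans (hNx p)
  rw [← sub_eq_zero]
  refine eq_zero_of_inner_frame (X := pdx u p) (Y := pdy u p) (N := N p) ?_ ?_ ?_
    (hxy p) (hNx p) (hNy p) ?_ ?_ ?_
  · intro h
    exact (Real.exp_pos (2 * ω p)).ne (by simpa [h] using hxx p)
  · intro h
    exact (Real.exp_pos (2 * ω p)).ne (by simpa [h] using hyy p)
  · intro h
    simpa [h] using hNN p
  · simp only [inner_sub_left, real_inner_smul_left, hIIx p, hxx p]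
    ring
  · simp only [inner_sub_left, real_inner_smul_left, hIIxy p, hxy p]
    ring
  · simp only [inner_sub_left, real_inner_smul_left, hn, hXN]
    ring

lemma hasDerivAt_horizontal {F : Type*} [NormedAddCommGroup F] [NormedSpace ℝ F]
    {f : ℝ × ℝ → F} {x : ℝ} (hf : DifferentiableAt ℝ f (x, 0)) :
    HasDerivAt (fun t : ℝ => f (t, 0)) (fderiv ℝ f (x, 0) (1, 0)) x :=
  hf.hasFDerivAt.comp_hasDerivAt x ((hasDerivAt_id x).prodMk (hasDerivAt_const x (0 : ℝ)))

theorem stmt12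
    (u N : ℝ × ℝ → EuclideanSpace ℝ (Fin 3)) (ω : ℝ × ℝ → ℝ)
    (hu : ContDiff ℝ 2 u) (hN : ContDiff ℝ 1 N) (hω : ContDiff ℝ 1 ω)
    (hxx : ∀ p : ℝ × ℝ, ⟪pdx u p, pdx u p⟫ = Real.exp (2 * ω p))
    (hyy : ∀ p : ℝ × ℝ, ⟪pdy u p, pdy u p⟫ = Real.exp (2 * ω p))
    (hxy : ∀ p : ℝ × ℝ, ⟪pdx u p, pdy u p⟫ = 0)
    (hNN : ∀ p : ℝ × ℝ, ⟪N p, N p⟫ = 1)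
    (hNx : ∀ p : ℝ × ℝ, ⟪N p, pdx u p⟫ = 0)
    (hNy : ∀ p : ℝ × ℝ, ⟪N p, pdy u p⟫ = 0)
    (hIIx : ∀ p : ℝ × ℝ,
      ⟪pdx N p, pdx u p⟫ = (1/2) * Real.exp (2 * ω p) * (1 + Real.exp (-(2 * ω p))))
    (hIIxy : ∀ p : ℝ × ℝ, ⟪pdx N p, pdy u p⟫ = 0)
    (hmix : ∀ p : ℝ × ℝ, ⟪pdxy u p, N p⟫ = 0)
    (θ R ε : ℝ) (hθ : Real.sin θ ≠ 0) (hR : 0 < R) (hε : ε = 1 ∨ ε = -1)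
    (hDur : ∀ x : ℝ,
      pdyR ω (x, 0) = (ε / (R * Real.sin θ)) * Real.exp (ω (x, 0))
        + (Real.cos θ / (2 * Real.sin θ)) * (Real.exp (ω (x, 0)) + Real.exp (-ω (x, 0)))) :
    (∀ x₁ x₂ : ℝ,
      u (x₁, 0) - (ε * R) •
          (Real.sin θ • (Real.exp (-ω (x₁, 0)) • pdy u (x₁, 0)) - Real.cos θ • N (x₁, 0))
        = u (x₂, 0) - (ε * R) •
          (Real.sin θ • (Real.exp (-ω (x₂, 0)) • pdy u (x₂, 0)) - Real.cos θ • N (x₂, 0))) ∧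
    ∃ c : EuclideanSpace ℝ (Fin 3), ∀ x : ℝ,
      (Real.sin θ • (Real.exp (-ω (x, 0)) • pdy u (x, 0)) - Real.cos θ • N (x, 0)
        = (ε / R) • (u (x, 0) - c)) ∧ ‖u (x, 0) - c‖ = R := by
  have hεε : ε * ε = 1 := by rcases hε with rfl | rfl <;> norm_num
  have hconst : ∀ x₁ x₂ : ℝ,
      u (x₁, 0) - (ε * R) •
          (Real.sin θ • (Real.exp (-ω (x₁, 0)) • pdy u (x₁, 0)) - Real.cos θ • N (x₁, 0))
        = u (x₂, 0) - (ε * R) •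
          (Real.sin θ • (Real.exp (-ω (x₂, 0)) • pdy u (x₂, 0)) - Real.cos θ • N (x₂, 0)) := by
    have hder : ∀ x : ℝ, HasDerivAt (fun t : ℝ => u (t, 0) - (ε * R) •
        (Real.sin θ • (Real.exp (-ω (t, 0)) • pdy u (t, 0)) - Real.cos θ • N (t, 0))) 0 x := by
      intro x
      have hu' := hasDerivAt_horizontal (hu.differentiable (by norm_num) (x, 0))
      have hN' := hasDerivAt_horizontal (hN.differentiable (by norm_num) (x, 0))
      have hω' := hasDerivAt_horizontal (hω.differentiable (by norm_num) (x, 0))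
      have hY' := hasDerivAt_horizontal (differentiableAt_fderiv_apply hu (x, 0) (0, 1))
      have h := hu'.sub ((((hω'.neg.exp.smul hY').const_smul (Real.sin θ)).sub
        (hN'.const_smul (Real.cos θ))).const_smul (ε * R))
      refine h.congr_deriv ?_
      have e1 := pdxy_eq hu hω hxx hyy hxy hNN hNx hNy hmix (x, 0)
      have e2 := pdx_normal_eq hN hxx hyy hxy hNN hNx hNy hIIx hIIxy (x, 0)
      have hsq : Real.exp (-(2 * ω (x, 0))) = Real.exp (-ω (x, 0)) * Real.exp (-ω (x, 0)) := by
        rw [← Real.exp_add]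
        ring_nf
      have hinv : Real.exp (-ω (x, 0)) * Real.exp (ω (x, 0)) = 1 := by
        rw [← Real.exp_add]
        simp
      -- The boundary condition makes the coefficient of `∂ₓu` vanish.
      have hcoef : 1 - ε * R * (Real.sin θ * (Real.exp (-ω (x, 0)) * pdyR ω (x, 0))
          - Real.cos θ * ((1/2) * (1 + Real.exp (-(2 * ω (x, 0)))))) = 0 := by
        have hs : Real.sin θ * pdyR ω (x, 0) = ε / R * Real.exp (ω (x, 0))
            + Real.cos θ / 2 * (Real.exp (ω (x, 0)) + Real.exp (-ω (x, 0))) := by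
          rw [hDur]
          field_simp
        have hRε : ε * R * (ε / R) = 1 := by
          field_simp
          linarith
        rw [hsq]
        linear_combination (-(ε * R) * Real.exp (-ω (x, 0))) * hs
          - (ε * R * (ε / R) + ε * R * Real.cos θ / 2) * hinv - hRε
      simp only [pdxy, pdx, pdy] at e1 e2 ⊢
      rw [e1, e2]
      generalize fderiv ℝ u (x, 0) (1, 0) = X at *
      generalize fderiv ℝ u (x, 0) (0, 1) = Y at *
      trans (1 - ε * R * (Real.sin θ * (Real.exp (-ω (x, 0)) * pdyR ω (x, 0))
          - Real.cos θ * ((1/2) * (1 + Real.exp (-(2 * ω (x, 0))))))) • X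
      · module
      · rw [hcoef, zero_smul]
    exact is_const_of_deriv_eq_zero (fun x => (hder x).differentiableAt) (fun x => (hder x).deriv)
  refine ⟨hconst, u (0, 0) - (ε * R) •
      (Real.sin θ • (Real.exp (-ω (0, 0)) • pdy u (0, 0)) - Real.cos θ • N (0, 0)), fun x => ?_⟩
  rw [hconst 0 x, sub_sub_cancel]
  constructor
  · have : ε / R * (ε * R) = 1 := by
      field_simp
      linarith
    rw [smul_smul (ε / R), this, one_smul]
  · have hYN : ⟪pdy u (x, 0), N (x, 0)⟫ = 0 := (real_inner_comm _ _).trans (hNy _)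
    have hunit : Real.exp (-ω (x, 0)) * (Real.exp (-ω (x, 0)) * Real.exp (2 * ω (x, 0))) = 1 := by
      rw [← Real.exp_add, ← Real.exp_add]
      ring_nf
      simp
    have h1 : ‖Real.sin θ • (Real.exp (-ω (x, 0)) • pdy u (x, 0)) - Real.cos θ • N (x, 0)‖ = 1 := by
      rw [← sq_eq_sq₀ (norm_nonneg _) zero_le_one, ← real_inner_self_eq_norm_sq]
      simp only [inner_sub_left, inner_sub_right, real_inner_smul_left, real_inner_smul_right,
        hyy, hYN, hNy, hNN]
      linear_combination Real.sin θ ^ 2 * hunit + Real.sin_sq_add_cos_sq θ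
    have hε1 : |ε| = 1 := by rcases hε with rfl | rfl <;> simp
    rw [norm_smul, h1, Real.norm_eq_abs, abs_mul, hε1, abs_of_pos hR, one_mul, mul_one]
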